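/- Let F : 𝕋 → ℂ be absolutely continuous with Ḟ ∈ L^∞(𝕋), and let f = P[F] be its Poisson integral. Then f_z and the conjugate of f_z̄ are bounded on 𝔻 (i.e., belong to H^∞(𝔻)) if and only if the Hilbert transform H(Ḟ) belongs to L^∞(𝕋); and in that case 2 i z f_z(z) = P[Ḟ + i H(Ḟ)](z) for all z ∈ 𝔻. -/

import Mathlib

open MeasureTheory Complex Metric Set Filter
open scoped Real Topology ENNReal

noncomputable section

/-- The Poisson kernel `P(z) = (1-|z|^2)/|1-z|^2`. -/
def poissonKer (z : ℂ) : ℝ := (1 - ‖z‖ ^ 2) / ‖1 - z‖ ^ 2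

/-- The Poisson integral of a boundary function `F` defined on the unit circle. -/
def poissonInt (F : ℂ → ℂ) (z : ℂ) : ℂ :=
  (1 / (2 * π)) * ∫ t in (0:ℝ)..(2 * π),
    (poissonKer (z * Complex.exp (-(t : ℂ) * Complex.I)) : ℂ) *
      F (Complex.exp ((t : ℂ) * Complex.I))

/-- The Poisson integral of a (2π-periodic) function of the angular variable. -/
def poissonIntR (φ : ℝ → ℂ) (z : ℂ) : ℂ :=
  (1 / (2 * π)) * ∫ t in (0:ℝ)..(2 * π),
    (poissonKer (z * Complex.exp (-(t : ℂ) * Complex.I)) : ℂ) * φ t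

/-- The conjugate Poisson kernel `P̃(z) = Im((1+z)/(1-z))`. -/
def conjPoissonKer (z : ℂ) : ℝ := ((1 + z) / (1 - z)).im

/-- The conjugate Poisson integral of a function of the angular variable. -/
def conjPoissonIntR (φ : ℝ → ℂ) (z : ℂ) : ℂ :=
  (1 / (2 * π)) * ∫ t in (0:ℝ)..(2 * π),
    (conjPoissonKer (z * Complex.exp (-(t : ℂ) * Complex.I)) : ℂ) * φ t

/-- Wirtinger derivative `f_z = (1/2)(∂ₓ - i ∂_y) f`. -/
def wdz (f : ℂ → ℂ) (z : ℂ) : ℂ :=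
  (1 / 2) * (fderiv ℝ f z 1 - Complex.I * fderiv ℝ f z Complex.I)

/-- Wirtinger derivative `f_z̄ = (1/2)(∂ₓ + i ∂_y) f`. -/
def wdzb (f : ℂ → ℂ) (z : ℂ) : ℂ :=
  (1 / 2) * (fderiv ℝ f z 1 + Complex.I * fderiv ℝ f z Complex.I)

/-- The angular derivative `f_θ(z) = i (z f_z(z) - z̄ f_z̄(z))`. -/
def fTheta (f : ℂ → ℂ) (z : ℂ) : ℂ :=
  Complex.I * (z * wdz f z - (starRingEnd ℂ) z * wdzb f z)

/-- The radial derivative multiplied by `r`: `r f_r(z) = z f_z(z) + z̄ f_z̄(z)`. -/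
def rFr (f : ℂ → ℂ) (z : ℂ) : ℂ :=
  z * wdz f z + (starRingEnd ℂ) z * wdzb f z

/-- `F : 𝕋 → ℂ` is absolutely continuous with angular derivative `Ḟ = Fd`,
i.e. `t ↦ F(e^{it})` is an indefinite integral of the (locally integrable,
2π-periodic) function `Fd`. -/
def IsACDeriv (F : ℂ → ℂ) (Fd : ℝ → ℂ) : Prop :=
  (∀ a b : ℝ, IntervalIntegrable Fd MeasureTheory.volume a b) ∧
  Function.Periodic Fd (2 * π) ∧
  ∀ t : ℝ, F (Complex.exp ((t : ℂ) * Complex.I)) = F 1 + ∫ s in (0:ℝ)..t, Fd s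

/-- membership in `L^p(𝕋)`, identifying `𝕋` with `[0, 2π)`. -/
def MemLpT (p : ℝ≥0∞) (φ : ℝ → ℂ) : Prop :=
  MeasureTheory.MemLp φ p (MeasureTheory.volume.restrict (Ioc (0:ℝ) (2 * π)))

/-- The integral mean `M_p(r, g)`. -/
def Mp (p : ℝ) (g : ℂ → ℂ) (r : ℝ) : ℝ :=
  ((1 / (2 * π)) * ∫ θ in (0:ℝ)..(2 * π),
      ‖g ((r : ℂ) * Complex.exp ((θ : ℂ) * Complex.I))‖ ^ p) ^ (1 / p)

/-- The `L^p(𝕋)` norm `((1/2π) ∫ |φ|^p)^{1/p}`. -/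
def lpNormT (p : ℝ) (φ : ℝ → ℂ) : ℝ :=
  ((1 / (2 * π)) * ∫ t in (0:ℝ)..(2 * π), ‖φ t‖ ^ p) ^ (1 / p)

/-- Membership in the analytic Hardy space `H^p(𝔻)` for `p ∈ [1, ∞)`. -/
def MemHp (p : ℝ) (g : ℂ → ℂ) : Prop :=
  DifferentiableOn ℂ g (ball (0:ℂ) 1) ∧ ∃ M : ℝ, ∀ r ∈ Ioo (0:ℝ) 1, Mp p g r ≤ M

/-- Membership in `H^∞(𝔻)`: bounded analytic functions on the unit disk. -/
def MemHinf (g : ℂ → ℂ) : Prop :=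
  DifferentiableOn ℂ g (ball (0:ℂ) 1) ∧ ∃ M : ℝ, ∀ z ∈ ball (0:ℂ) 1, ‖g z‖ ≤ M

/-- Harmonicity on the unit disk: `f` is C² with vanishing Laplacian. -/
def HarmonicOnD (f : ℂ → ℂ) : Prop :=
  ContDiffOn ℝ 2 f (ball (0:ℂ) 1) ∧
  ∀ z ∈ ball (0:ℂ) 1,
    fderiv ℝ (fun w => fderiv ℝ f w 1) z 1
      + fderiv ℝ (fun w => fderiv ℝ f w Complex.I) z Complex.I = 0

/-- Membership in the harmonic Hardy space `h^p(𝔻)` for `p ∈ [1, ∞)`. -/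
def Memhp (p : ℝ) (g : ℂ → ℂ) : Prop :=
  HarmonicOnD g ∧ ∃ M : ℝ, ∀ r ∈ Ioo (0:ℝ) 1, Mp p g r ≤ M

/-- Membership in `h^∞(𝔻)`: bounded harmonic functions on the unit disk. -/
def Memhinf (g : ℂ → ℂ) : Prop :=
  HarmonicOnD g ∧ ∃ M : ℝ, ∀ z ∈ ball (0:ℂ) 1, ‖g z‖ ≤ M

/-- `L` is the value of the principal-value Hilbert transform
`(1/2π) p.v. ∫ φ(t)/tan((θ-t)/2) dt` of (the 2π-periodic) `φ` at `θ`. -/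
def IsPVHilbert (φ : ℝ → ℂ) (θ : ℝ) (L : ℂ) : Prop :=
  Filter.Tendsto
    (fun ε : ℝ => (1 / (2 * π)) *
      ∫ t in Ioo (θ - π) (θ + π) \ Ioo (θ - ε) (θ + ε),
        φ t / (Real.tan ((θ - t) / 2) : ℂ))
    (nhdsWithin 0 (Ioi 0)) (nhds L)

/-!
Let `A[φ]` be the integral of `φ` against the rotates of the Herglotz kernel `(1 + z) / (1 - z)`,
so that `A[φ] = P[φ] + i Q[φ]` with `Q` the conjugate Poisson integral. On the disk
`P[F] = (A[F] + conj A[conj F]) / 2`, hence `f_z = A[F]' / 2` and `conj f_z̄ = A[conj F]' / 2`.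
Since kernel integrals commute with rotations, integrating `Ḟ` gives `i z A[F]' = A[Ḟ]`, so each of
`f_z` and `conj f_z̄` is bounded exactly when `Q[Ḟ]` is.

It remains to compare `φ = Ḟ` with `Q[φ]`. The truncation `H_ε φ` of the Hilbert transform differs
from `θ ↦ Q[φ]((1 - ε) e^{iθ})` by at most `π ‖φ‖_∞`, so `H φ` is bounded if `Q[φ]` is. Conversely
`H_ε φ` is a convolution, so `P[H_ε φ]` is the same average of rotates of `P[φ]` and tends to
`Q[φ]` by the mean value property. The mean value property of `A[φ] A[conj φ]` bounds `H_ε φ` in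
`L²` uniformly in `ε`, and Vitali's theorem yields `P[H φ] = Q[φ]`.
-/

open scoped ComplexConjugate NNReal

/-- A representative on the line of an element of `L^∞(𝕋)` of norm at most `M`: `φ` is measurable,
`2π`-periodic and essentially (not necessarily everywhere) bounded by `M`. -/
structure IsBddPeriodic (φ : ℝ → ℂ) (M : ℝ) : Prop where
  periodic : Function.Periodic φ (2 * π)
  aestronglyMeasurable : AEStronglyMeasurable φ
  ae_norm_le : ∀ᵐ t, ‖φ t‖ ≤ M

/-- The operator of integration against the rotates of a kernel `k` on the disk, of which the
Poisson, conjugate Poisson and Herglotz integrals are instances. -/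
def kernelInt (k : ℂ → ℂ) (φ : ℝ → ℂ) (z : ℂ) : ℂ :=
  (1 / (2 * π)) * ∫ t in (0 : ℝ)..(2 * π), k (z * exp (-(t : ℂ) * I)) * φ t

section BddPeriodic

variable {φ : ℝ → ℂ} {M : ℝ}

lemma IsBddPeriodic.conj (h : IsBddPeriodic φ M) : IsBddPeriodic (conj φ) M where
  periodic t := by simp only [Pi.conj_apply, h.periodic t]
  aestronglyMeasurable := continuous_conj.comp_aestronglyMeasurable h.aestronglyMeasurable
  ae_norm_le := by simpa only [Pi.conj_apply, RCLike.norm_conj] using h.ae_norm_le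

lemma IsBddPeriodic.integrable_mul (h : IsBddPeriodic φ M) {c : ℝ → ℂ} (hc : Integrable c) :
    Integrable (fun t => c t * φ t) :=
  hc.mul_bdd h.aestronglyMeasurable h.ae_norm_le

lemma IsBddPeriodic.locallyIntegrable (h : IsBddPeriodic φ M) : LocallyIntegrable φ :=
  (locallyIntegrable_const M).mono h.aestronglyMeasurable <| by
    filter_upwards [h.ae_norm_le] with t ht using ht.trans (le_abs_self M)

lemma IsBddPeriodic.intervalIntegrable (h : IsBddPeriodic φ M) (a b : ℝ) :
    IntervalIntegrable φ volume a b :=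
  (h.locallyIntegrable.integrableOn_isCompact isCompact_uIcc).intervalIntegrable

lemma IsBddPeriodic.comp_const_sub (h : IsBddPeriodic φ M) (θ : ℝ) :
    IsBddPeriodic (fun s => φ (θ - s)) M where
  periodic s := by simp only [← sub_sub, h.periodic.sub_eq]
  aestronglyMeasurable := h.aestronglyMeasurable.comp_measurePreserving
    (Measure.measurePreserving_sub_left volume θ)
  ae_norm_le := (Measure.measurePreserving_sub_left volume θ).quasiMeasurePreserving.ae h.ae_norm_le

/-- The bound is Young's inequality `‖c ∗ φ‖_∞ ≤ ‖c‖₁ ‖φ‖_∞`. -/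
lemma IsBddPeriodic.convolution (h : IsBddPeriodic φ M) {c : ℝ → ℂ} (hc : Integrable c) :
    IsBddPeriodic (fun t => ∫ s, c s * φ (t - s)) ((∫ s, ‖c s‖) * M) where
  periodic t := by simp only [add_sub_right_comm, h.periodic _]
  aestronglyMeasurable := by
    have hφ := h.aestronglyMeasurable.comp_quasiMeasurePreserving
      (quasiMeasurePreserving_sub_of_right_invariant volume volume)
    exact (hc.1.comp_snd.mul hφ).integral_prod_right'
  ae_norm_le := .of_forall fun t => by
    rw [← integral_mul_const]
    refine norm_integral_le_of_norm_le (hc.norm.mul_const M) ?_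
    filter_upwards [(h.comp_const_sub t).ae_norm_le] with s hs
    rw [norm_mul]
    gcongr

lemma exists_isBddPeriodic_of_continuous (hc : Continuous φ) (hp : Function.Periodic φ (2 * π)) :
    ∃ M, IsBddPeriodic φ M := by
  obtain ⟨M, hM⟩ := (hp.isBounded_of_continuous Real.two_pi_pos.ne' hc).exists_norm_le
  exact ⟨M, hp, hc.aestronglyMeasurable, .of_forall fun t => hM _ (mem_range_self t)⟩

end BddPeriodic

section KernelInt

variable {k : ℂ → ℂ} {φ ψ : ℝ → ℂ} {M : ℝ} {z : ℂ}

lemma norm_mul_exp_neg_mul_I (z : ℂ) (t : ℝ) : ‖z * exp (-(t : ℂ) * I)‖ = ‖z‖ := by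
  rw [norm_mul, ← ofReal_neg, norm_exp_ofReal_mul_I, mul_one]

lemma mul_exp_neg_mul_I_mem_ball (hz : z ∈ ball (0 : ℂ) 1) (t : ℝ) :
    z * exp (-(t : ℂ) * I) ∈ ball (0 : ℂ) 1 := by
  rwa [mem_ball_zero_iff, norm_mul_exp_neg_mul_I, ← mem_ball_zero_iff]

lemma continuous_comp_mul_exp_neg_mul_I (hk : ContinuousOn k (ball 0 1))
    (hz : z ∈ ball (0 : ℂ) 1) : Continuous fun t : ℝ => k (z * exp (-(t : ℂ) * I)) :=
  hk.comp_continuous (by fun_prop) (mul_exp_neg_mul_I_mem_ball hz)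

lemma periodic_mul_exp_neg_mul_I (k : ℂ → ℂ) (z : ℂ) :
    Function.Periodic (fun t : ℝ => k (z * exp (-(t : ℂ) * I))) (2 * π) := fun t => by
  have h := exp_periodic.sub_eq (-(t : ℂ) * I)
  dsimp only
  rw [← h]
  push_cast
  ring_nf

lemma intervalIntegrable_kernel_mul (hk : ContinuousOn k (ball 0 1)) (hz : z ∈ ball (0 : ℂ) 1)
    {a b : ℝ} (hφ : IntervalIntegrable φ volume a b) :
    IntervalIntegrable (fun t : ℝ => k (z * exp (-(t : ℂ) * I)) * φ t) volume a b :=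
  hφ.continuousOn_mul (continuous_comp_mul_exp_neg_mul_I hk hz).continuousOn

lemma kernelInt_add (hk : ContinuousOn k (ball 0 1)) (hz : z ∈ ball (0 : ℂ) 1)
    (hφ : IntervalIntegrable φ volume 0 (2 * π)) (hψ : IntervalIntegrable ψ volume 0 (2 * π)) :
    kernelInt k (φ + ψ) z = kernelInt k φ z + kernelInt k ψ z := by
  simp only [kernelInt, Pi.add_apply, mul_add]
  rw [intervalIntegral.integral_add (intervalIntegrable_kernel_mul hk hz hφ)
    (intervalIntegrable_kernel_mul hk hz hψ), mul_add]

lemma kernelInt_const_mul (k : ℂ → ℂ) (c : ℂ) (φ : ℝ → ℂ) (z : ℂ) :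
    kernelInt k (fun t => c * φ t) z = c * kernelInt k φ z := by
  simp only [kernelInt, mul_left_comm _ c, intervalIntegral.integral_const_mul]

lemma kernelInt_conj (k : ℂ → ℂ) (φ : ℝ → ℂ) (z : ℂ) :
    kernelInt (conj k) (conj φ) z = conj (kernelInt k φ z) := by
  simp only [kernelInt, Pi.conj_apply, map_mul, ← intervalIntegral.intervalIntegral_conj,
    map_div₀, map_one, conj_ofReal, Complex.conj_ofNat]

lemma kernelInt_eq_integral_add (k : ℂ → ℂ) (hφ : Function.Periodic φ (2 * π)) (z : ℂ) (a : ℝ) :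
    kernelInt k φ z
      = (1 / (2 * π)) * ∫ t in a..(a + 2 * π), k (z * exp (-(t : ℂ) * I)) * φ t := by
  have h := ((periodic_mul_exp_neg_mul_I k z).mul hφ).intervalIntegral_add_eq 0 a
  rw [zero_add] at h
  exact congrArg _ h

lemma kernelInt_rotate (k : ℂ → ℂ) (hφ : Function.Periodic φ (2 * π)) (z : ℂ) (s : ℝ) :
    kernelInt k φ (z * exp (-(s : ℂ) * I)) = kernelInt k (fun t => φ (t - s)) z := by
  have hexp (t : ℝ) :
      z * exp (-(t : ℂ) * I) = z * exp (-(s : ℂ) * I) * exp (-((t - s : ℝ) : ℂ) * I) := by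
    rw [mul_assoc, ← exp_add]
    push_cast
    ring_nf
  rw [kernelInt_eq_integral_add k hφ _ (-s), kernelInt]
  simp_rw [fun t => congrArg k (hexp t)]
  rw [intervalIntegral.integral_comp_sub_right
    (fun t => k (z * exp (-(s : ℂ) * I) * exp (-(t : ℂ) * I)) * φ t), zero_sub,
    sub_eq_neg_add (2 * π)]

lemma kernelInt_eq_integral_reflect (k : ℂ → ℂ) (hφ : Function.Periodic φ (2 * π)) (z : ℂ)
    (θ : ℝ) : kernelInt k φ (z * exp ((θ : ℂ) * I))
      = (1 / (2 * π)) * ∫ s in (-π)..π, k (z * exp ((s : ℂ) * I)) * φ (θ - s) := by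
  have hexp (s : ℝ) :
      z * exp ((s : ℂ) * I) = z * exp ((θ : ℂ) * I) * exp (-((θ - s : ℝ) : ℂ) * I) := by
    rw [mul_assoc, ← exp_add]
    push_cast
    ring_nf
  rw [kernelInt_eq_integral_add k hφ _ (θ - π)]
  simp_rw [fun s => congrArg k (hexp s)]
  rw [intervalIntegral.integral_comp_sub_left
    (fun t => k (z * exp ((θ : ℂ) * I) * exp (-(t : ℂ) * I)) * φ t)]
  ring_nf

/-- Translates of `φ` correspond to rotates of `z`, so by Fubini a kernel integral commutes with
convolution. -/
lemma kernelInt_convolution (hk : ContinuousOn k (ball 0 1)) (hφ : IsBddPeriodic φ M)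
    {c : ℝ → ℂ} (hc : Integrable c) (hz : z ∈ ball (0 : ℂ) 1) :
    kernelInt k (fun t => ∫ s, c s * φ (t - s)) z
      = ∫ s, c s * kernelInt k φ (z * exp (-(s : ℂ) * I)) := by
  have hkz : Integrable (fun t : ℝ => k (z * exp (-(t : ℂ) * I)))
      (volume.restrict (uIoc 0 (2 * π))) :=
    ((continuous_comp_mul_exp_neg_mul_I hk hz).intervalIntegrable _ _).def'
  have hsub : Measure.QuasiMeasurePreserving (fun p : ℝ × ℝ => p.1 - p.2)
      ((volume.restrict (uIoc 0 (2 * π))).prod volume) volume :=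
    (quasiMeasurePreserving_sub_of_right_invariant volume volume).mono_left
      (Measure.restrict_le_self.absolutelyContinuous.prod .rfl)
  have hint : Integrable (Function.uncurry fun t s : ℝ =>
      k (z * exp (-(t : ℂ) * I)) * (c s * φ (t - s)))
      ((volume.restrict (uIoc 0 (2 * π))).prod volume) := by
    simpa only [Function.uncurry_def, Function.comp_def, mul_assoc] using (hkz.mul_prod hc).mul_bdd
      (hφ.aestronglyMeasurable.comp_quasiMeasurePreserving hsub) (hsub.ae hφ.ae_norm_le)
  simp only [fun s => kernelInt_rotate k hφ.periodic z s]
  simp only [kernelInt, mul_left_comm (c _), ← intervalIntegral.integral_const_mul,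
    ← integral_const_mul]
  simp only [intervalIntegral.integral_const_mul, integral_const_mul]
  simp only [← integral_const_mul (k _), intervalIntegral_integral_swap hint]

end KernelInt

section Herglotz

/-- The Herglotz kernel, the holomorphic function on the disk with real part `poissonKer` and
imaginary part `conjPoissonKer`. -/
def herglotzKer (w : ℂ) : ℂ := (1 + w) / (1 - w)

/-- The Herglotz integral: the holomorphic completion of the Poisson integral. -/
def herglotzInt (φ : ℝ → ℂ) : ℂ → ℂ := kernelInt herglotzKer φ

variable {φ : ℝ → ℂ} {M : ℝ} {z : ℂ}

lemma differentiableOn_herglotzKer : DifferentiableOn ℂ herglotzKer (ball 0 1) := by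
  refine (differentiableOn_id.const_add 1).div (differentiableOn_id.const_sub 1) fun w hw h => ?_
  rw [mem_ball_zero_iff, ← sub_eq_zero.1 h, norm_one] at hw
  exact lt_irrefl 1 hw

lemma herglotzKer_re (w : ℂ) : (herglotzKer w).re = poissonKer w := by
  rw [herglotzKer, poissonKer, div_re, ← normSq_eq_norm_sq, ← normSq_eq_norm_sq, normSq_apply w]
  simp only [add_re, one_re, sub_re, add_im, one_im, sub_im]
  ring

lemma herglotzKer_eq (w : ℂ) : herglotzKer w = poissonKer w + I * conjPoissonKer w := by
  rw [← herglotzKer_re, mul_comm]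
  exact (re_add_im _).symm

lemma continuousOn_ofReal_poissonKer :
    ContinuousOn (fun w => (poissonKer w : ℂ)) (ball 0 1) := by
  simpa only [Function.comp_def, herglotzKer_re] using (continuous_ofReal.comp
    continuous_re).comp_continuousOn differentiableOn_herglotzKer.continuousOn

lemma continuousOn_ofReal_conjPoissonKer :
    ContinuousOn (fun w => (conjPoissonKer w : ℂ)) (ball 0 1) :=
  (continuous_ofReal.comp continuous_im).comp_continuousOn
    differentiableOn_herglotzKer.continuousOn

lemma poissonIntR_eq_kernelInt : poissonIntR φ = kernelInt (fun w => (poissonKer w : ℂ)) φ := rfl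

lemma conjPoissonIntR_eq_kernelInt :
    conjPoissonIntR φ = kernelInt (fun w => (conjPoissonKer w : ℂ)) φ := rfl

lemma kernelInt_ofReal_conj (κ : ℂ → ℝ) (φ : ℝ → ℂ) (z : ℂ) :
    kernelInt (fun w => (κ w : ℂ)) (conj φ) z = conj (kernelInt (fun w => (κ w : ℂ)) φ z) := by
  rw [← kernelInt_conj]
  congr 1
  exact funext fun w => (conj_ofReal _).symm

lemma herglotzInt_eq (hφ : IntervalIntegrable φ volume 0 (2 * π)) (hz : z ∈ ball (0 : ℂ) 1) :
    herglotzInt φ z = poissonIntR φ z + I * conjPoissonIntR φ z := by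
  rw [poissonIntR, conjPoissonIntR, mul_left_comm, ← intervalIntegral.integral_const_mul I,
    ← mul_add, ← intervalIntegral.integral_add
      (intervalIntegrable_kernel_mul continuousOn_ofReal_poissonKer hz hφ)
      ((intervalIntegrable_kernel_mul continuousOn_ofReal_conjPoissonKer hz hφ).const_mul I)]
  simp only [herglotzInt, kernelInt, herglotzKer_eq, add_mul, mul_assoc]

lemma conj_herglotzInt_conj (hφ : IntervalIntegrable φ volume 0 (2 * π))
    (hz : z ∈ ball (0 : ℂ) 1) :
    conj (herglotzInt (conj φ) z) = poissonIntR φ z - I * conjPoissonIntR φ z := by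
  have hφ' : IntervalIntegrable (conj φ) volume 0 (2 * π) :=
    ⟨(conjCLE : ℂ →L[ℝ] ℂ).integrable_comp hφ.1, (conjCLE : ℂ →L[ℝ] ℂ).integrable_comp hφ.2⟩
  rw [herglotzInt_eq hφ' hz, poissonIntR_eq_kernelInt, conjPoissonIntR_eq_kernelInt,
    kernelInt_ofReal_conj, kernelInt_ofReal_conj, map_add, map_mul, conj_I, conj_conj, conj_conj,
    neg_mul, ← sub_eq_add_neg]
  rfl

lemma differentiableOn_herglotzInt (hφ : IsBddPeriodic φ M) :
    DifferentiableOn ℂ (herglotzInt φ) (ball 0 1) := by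
  have harg (t : ℝ) : φ (arg (circleMap 0 1 t)) = φ t := by
    rw [circleMap_zero, ofReal_one, one_mul, arg_exp_mul_I]
    exact hφ.periodic.sub_zsmul_eq _
  have hint : CircleIntegrable (fun ζ => φ (arg ζ)) 0 1 := by
    simpa only [CircleIntegrable, harg] using hφ.intervalIntegrable 0 (2 * π)
  refine (differentiableOn_circleAverage_herglotzRieszKernel_smul hint).congr fun z _ => ?_
  have hker (t : ℝ) : herglotzRieszKernel 0 z (circleMap 0 1 t)
      = herglotzKer (z * exp (-(t : ℂ) * I)) := by
    rw [herglotzRieszKernel_def, herglotzKer, circleMap_zero, ofReal_one, one_mul, sub_zero,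
      sub_zero, neg_mul, exp_neg]
    field_simp
  simp only [Real.circleAverage_def, harg, hker, herglotzInt, kernelInt, real_smul, smul_eq_mul]
  push_cast
  rw [one_div]

lemma integral_mul_exp_of_differentiableOn {g : ℂ → ℂ} (hg : DifferentiableOn ℂ g (ball 0 1))
    (hz : z ∈ ball (0 : ℂ) 1) :
    ∫ t in (0 : ℝ)..(2 * π), g (z * exp ((t : ℂ) * I)) = 2 * π * g 0 := by
  have hd : DiffContOnCl ℂ (fun ζ => g (z * ζ)) (ball 0 |1|) := by
    refine DifferentiableOn.diffContOnCl (hg.comp (by fun_prop) fun ζ hζ => ?_)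
    rw [abs_one, closure_ball _ one_ne_zero, mem_closedBall_zero_iff] at hζ
    rw [mem_ball_zero_iff] at hz ⊢
    exact (norm_mul_le_of_le le_rfl hζ).trans_lt (by rwa [mul_one])
  have h := hd.circleAverage
  simp only [Real.circleAverage_def, circleMap_zero, ofReal_one, one_mul, mul_zero,
    real_smul] at h
  rw [← h, ofReal_inv, ofReal_mul, ofReal_ofNat,
    mul_inv_cancel_left₀ (mul_ne_zero two_ne_zero (ofReal_ne_zero.2 Real.pi_ne_zero))]

lemma kernelInt_one_of_differentiableOn {g : ℂ → ℂ} (hg : DifferentiableOn ℂ g (ball 0 1))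
    (hz : z ∈ ball (0 : ℂ) 1) : kernelInt g 1 z = g 0 := by
  have h := intervalIntegral.integral_comp_neg (a := 0) (b := 2 * π)
    fun t : ℝ => g (z * exp (-(t : ℂ) * I))
  simp only [ofReal_neg, neg_neg, integral_mul_exp_of_differentiableOn hg hz] at h
  rw [kernelInt_eq_integral_add g (fun _ => rfl) z (-(2 * π)), neg_add_cancel]
  simp only [Pi.one_apply, mul_one]
  rw [← neg_zero, ← h, one_div,
    inv_mul_cancel_left₀ (mul_ne_zero two_ne_zero (ofReal_ne_zero.2 Real.pi_ne_zero))]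

lemma poissonIntR_one (hz : z ∈ ball (0 : ℂ) 1) : poissonIntR 1 z = 1 := by
  have hA : herglotzInt 1 z = 1 :=
    (kernelInt_one_of_differentiableOn differentiableOn_herglotzKer hz).trans
      (by simp only [herglotzKer, add_zero, sub_zero, div_one])
  have h1 : IntervalIntegrable (1 : ℝ → ℂ) volume 0 (2 * π) := intervalIntegrable_const
  have h := conj_herglotzInt_conj h1 hz
  rw [map_one, hA, map_one] at h
  rw [herglotzInt_eq h1 hz] at hA
  linear_combination (hA - h) / 2

lemma poissonKer_nonneg {w : ℂ} (hw : w ∈ ball (0 : ℂ) 1) : 0 ≤ poissonKer w :=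
  div_nonneg (sub_nonneg.2 (pow_le_one₀ (norm_nonneg _) (mem_ball_zero_iff.1 hw).le))
    (sq_nonneg _)

lemma norm_one_div_two_pi : ‖(1 / (2 * π) : ℂ)‖ = 1 / (2 * π) := by
  rw [norm_div, norm_one, ← ofReal_ofNat, ← ofReal_mul, norm_real,
    Real.norm_of_nonneg Real.two_pi_pos.le]

lemma norm_poissonIntR_le (hz : z ∈ ball (0 : ℂ) 1)
    (hM : ∀ᵐ t, t ∈ Ioc 0 (2 * π) → ‖φ t‖ ≤ M) : ‖poissonIntR φ z‖ ≤ M := by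
  have hP (t : ℝ) := poissonKer_nonneg (mul_exp_neg_mul_I_mem_ball hz t)
  have hone : (1 / (2 * π)) * ∫ t in (0 : ℝ)..(2 * π), poissonKer (z * exp (-(t : ℂ) * I)) = 1 := by
    have h := poissonIntR_one hz
    simp only [poissonIntR, Pi.one_apply, mul_one, intervalIntegral.integral_ofReal] at h
    exact_mod_cast h
  have hbound : ‖∫ t in (0 : ℝ)..(2 * π), (poissonKer (z * exp (-(t : ℂ) * I)) : ℂ) * φ t‖
      ≤ ∫ t in (0 : ℝ)..(2 * π), poissonKer (z * exp (-(t : ℂ) * I)) * M := by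
    refine intervalIntegral.norm_integral_le_of_norm_le Real.two_pi_pos.le ?_ ?_
    · filter_upwards [hM] with t ht hmem
      rw [norm_mul, norm_real, Real.norm_of_nonneg (hP t)]
      exact mul_le_mul_of_nonneg_left (ht hmem) (hP t)
    · refine (Continuous.mul ?_ continuous_const).intervalIntegrable _ _
      exact continuous_re.comp (continuous_comp_mul_exp_neg_mul_I continuousOn_ofReal_poissonKer hz)
  rw [intervalIntegral.integral_mul_const] at hbound
  calc ‖poissonIntR φ z‖
      ≤ 1 / (2 * π) * ((∫ t in (0 : ℝ)..(2 * π), poissonKer (z * exp (-(t : ℂ) * I))) * M) := by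
        rw [poissonIntR, norm_mul, norm_one_div_two_pi]
        gcongr
    _ = M := by rw [← mul_assoc, hone, one_mul]

lemma kernelInt_sub_rotate {k : ℂ → ℂ} {G : ℝ → ℂ} {N θ : ℝ} (hk : ContinuousOn k (ball 0 1))
    (hφ : IsBddPeriodic φ M) (hG : IsBddPeriodic G N)
    (hGφ : ∀ a b, ∫ t in a..b, φ t = G b - G a) (hz : z ∈ ball (0 : ℂ) 1) (hθ : 0 ≤ θ) :
    kernelInt k G z - kernelInt k G (z * exp (-(θ : ℂ) * I))
      = ∫ s in (0 : ℝ)..θ, kernelInt k φ (z * exp (-(s : ℂ) * I)) := by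
  have hind (f : ℝ → ℂ) :
      ∫ s in (0 : ℝ)..θ, f s = ∫ s, (Ioc 0 θ).indicator (1 : ℝ → ℂ) s * f s := by
    rw [intervalIntegral.integral_of_le hθ, ← integral_indicator measurableSet_Ioc]
    exact integral_congr_ae (.of_forall fun s => by simp [indicator_apply])
  have hint : Integrable ((Ioc 0 θ).indicator (1 : ℝ → ℂ)) :=
    (integrableOn_const (by simp)).integrable_indicator measurableSet_Ioc
  have hdiff (t : ℝ) :
      ∫ s, (Ioc 0 θ).indicator (1 : ℝ → ℂ) s * φ (t - s) = G t + (-1) * G (t - θ) := by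
    rw [← hind, intervalIntegral.integral_comp_sub_left φ, hGφ, sub_zero]
    ring
  have hGθ : IntervalIntegrable (fun t => (-1) * G (t - θ)) volume 0 (2 * π) := by
    simpa using ((hG.intervalIntegrable (0 - θ) (2 * π - θ)).comp_sub_right θ).const_mul (-1)
  rw [hind, ← kernelInt_convolution hk hφ hint hz, funext hdiff]
  refine .trans ?_ (kernelInt_add hk hz (hG.intervalIntegrable _ _) hGθ).symm
  rw [kernelInt_const_mul, kernelInt_rotate k hG.periodic]
  ring

lemma I_mul_mul_deriv_herglotzInt {G : ℝ → ℂ} {N : ℝ} (hφ : IsBddPeriodic φ M)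
    (hG : IsBddPeriodic G N) (hGφ : ∀ a b, ∫ t in a..b, φ t = G b - G a)
    (hz : z ∈ ball (0 : ℂ) 1) : I * z * deriv (herglotzInt G) z = herglotzInt φ z := by
  have hrot : HasDerivAt (fun θ : ℝ => z * exp (-(θ : ℂ) * I)) (-(z * I)) 0 := by
    have h := ((((hasDerivAt_id (0 : ℝ)).ofReal_comp).neg.mul_const I).cexp).const_mul z
    simpa using h
  have hchain : HasDerivAt (fun θ : ℝ => herglotzInt G z - herglotzInt G (z * exp (-(θ : ℂ) * I)))
      (I * z * deriv (herglotzInt G) z) 0 := by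
    have hA : HasDerivAt (herglotzInt G) (deriv (herglotzInt G) z)
        (z * exp (-((0 : ℝ) : ℂ) * I)) := by
      rw [ofReal_zero, neg_zero, zero_mul, exp_zero, mul_one]
      exact ((differentiableOn_herglotzInt hG).differentiableAt
        (isOpen_ball.mem_nhds hz)).hasDerivAt
    have h := (HasDerivAt.comp (h₂ := herglotzInt G) 0 hA hrot).const_sub (herglotzInt G z)
    exact h.congr_deriv (by ring)
  have hftc : HasDerivWithinAt
      (fun θ : ℝ => herglotzInt G z - herglotzInt G (z * exp (-(θ : ℂ) * I)))
      (herglotzInt φ z) (Ici 0) 0 := by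
    have hcont := continuous_comp_mul_exp_neg_mul_I
      (differentiableOn_herglotzInt hφ).continuousOn hz
    have h := (hcont.integral_hasStrictDerivAt 0 0).hasDerivAt.hasDerivWithinAt (s := Ici 0)
    simp only [ofReal_zero, neg_zero, zero_mul, exp_zero, mul_one] at h
    exact h.congr_of_mem (fun θ hθ => kernelInt_sub_rotate
      differentiableOn_herglotzKer.continuousOn hφ hG hGφ hz hθ) self_mem_Ici
  exact (uniqueDiffWithinAt_Ici 0).eq_deriv _ hchain.hasDerivWithinAt hftc

lemma poissonIntR_eq_herglotzInt (hφ : IntervalIntegrable φ volume 0 (2 * π))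
    (hz : z ∈ ball (0 : ℂ) 1) :
    poissonIntR φ z = (herglotzInt φ z + conj (herglotzInt (conj φ) z)) / 2 := by
  rw [herglotzInt_eq hφ hz, conj_herglotzInt_conj hφ hz]
  ring

lemma conjPoissonIntR_eq_herglotzInt (hφ : IntervalIntegrable φ volume 0 (2 * π))
    (hz : z ∈ ball (0 : ℂ) 1) :
    conjPoissonIntR φ z = (herglotzInt φ z - conj (herglotzInt (conj φ) z)) / (2 * I) := by
  rw [herglotzInt_eq hφ hz, conj_herglotzInt_conj hφ hz]
  field_simp [I_ne_zero]
  ring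

lemma continuousOn_poissonIntR (hφ : IsBddPeriodic φ M) :
    ContinuousOn (poissonIntR φ) (ball 0 1) :=
  (((differentiableOn_herglotzInt hφ).continuousOn.add (continuous_conj.comp_continuousOn
    (differentiableOn_herglotzInt hφ.conj).continuousOn)).div_const 2).congr
    fun _ => poissonIntR_eq_herglotzInt (hφ.intervalIntegrable _ _)

lemma continuousOn_conjPoissonIntR (hφ : IsBddPeriodic φ M) :
    ContinuousOn (conjPoissonIntR φ) (ball 0 1) :=
  (((differentiableOn_herglotzInt hφ).continuousOn.sub (continuous_conj.comp_continuousOn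
    (differentiableOn_herglotzInt hφ.conj).continuousOn)).div_const (2 * I)).congr
    fun _ => conjPoissonIntR_eq_herglotzInt (hφ.intervalIntegrable _ _)

lemma herglotzInt_conj_zero (φ : ℝ → ℂ) : herglotzInt (conj φ) 0 = conj (herglotzInt φ 0) := by
  rw [herglotzInt, herglotzInt, ← kernelInt_conj]
  simp only [kernelInt, herglotzKer, zero_mul, Pi.conj_apply, add_zero, sub_zero, div_one, map_one]

lemma norm_sq_conjPoissonIntR (hφ : IntervalIntegrable φ volume 0 (2 * π))
    (hz : z ∈ ball (0 : ℂ) 1) :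
    ‖conjPoissonIntR φ z‖ ^ 2
      = ‖poissonIntR φ z‖ ^ 2 - (herglotzInt φ z * herglotzInt (conj φ) z).re := by
  rw [poissonIntR_eq_herglotzInt hφ hz, conjPoissonIntR_eq_herglotzInt hφ hz]
  simp only [← normSq_eq_norm_sq, normSq_div, normSq_mul, normSq_I, normSq_ofNat]
  simp only [normSq_apply, add_re, add_im, sub_re, sub_im, mul_re, conj_re, conj_im]
  ring

lemma mul_exp_mul_I_mem_ball (hz : z ∈ ball (0 : ℂ) 1) (t : ℝ) :
    z * exp ((t : ℂ) * I) ∈ ball (0 : ℂ) 1 := by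
  rwa [mem_ball_zero_iff, norm_mul, norm_exp_ofReal_mul_I, mul_one, ← mem_ball_zero_iff]

/-- The mean of `|P[φ]|² - |Q[φ]|² = Re (A[φ] A[φ̄])` over a circle is its value at the centre,
`|φ̂(0)|² ≥ 0`, where `Q` and `A` denote the conjugate Poisson and Herglotz integrals. -/
lemma integral_norm_sq_conjPoissonIntR_le (hφ : IsBddPeriodic φ M) (hz : z ∈ ball (0 : ℂ) 1) :
    ∫ θ in (0 : ℝ)..(2 * π), ‖conjPoissonIntR φ (z * exp ((θ : ℂ) * I))‖ ^ 2
      ≤ 2 * π * M ^ 2 := by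
  let g : ℂ → ℂ := fun w => herglotzInt φ w * herglotzInt (conj φ) w
  have hg : DifferentiableOn ℂ g (ball 0 1) :=
    (differentiableOn_herglotzInt hφ).mul (differentiableOn_herglotzInt hφ.conj)
  have hmem := mul_exp_mul_I_mem_ball hz
  have hgc : Continuous fun θ : ℝ => g (z * exp ((θ : ℂ) * I)) :=
    hg.continuousOn.comp_continuous (by fun_prop) hmem
  have hPc : Continuous fun θ : ℝ => poissonIntR φ (z * exp ((θ : ℂ) * I)) :=
    (continuousOn_poissonIntR hφ).comp_continuous (by fun_prop) hmem
  have hg0 : 0 ≤ (g 0).re := by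
    change 0 ≤ (herglotzInt φ 0 * herglotzInt (conj φ) 0).re
    rw [herglotzInt_conj_zero, mul_conj, ofReal_re]
    exact normSq_nonneg _
  have hmean : ∫ θ in (0 : ℝ)..(2 * π), (g (z * exp ((θ : ℂ) * I))).re = 2 * π * (g 0).re := by
    refine (reCLM.intervalIntegral_comp_comm (hgc.intervalIntegrable _ _)).trans ?_
    rw [integral_mul_exp_of_differentiableOn hg hz, ← ofReal_ofNat, ← ofReal_mul]
    exact re_ofReal_mul _ _
  have hP : ∫ θ in (0 : ℝ)..(2 * π), ‖poissonIntR φ (z * exp ((θ : ℂ) * I))‖ ^ 2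
      ≤ 2 * π * M ^ 2 := by
    refine (intervalIntegral.integral_mono_on (g := fun _ => M ^ 2) Real.two_pi_pos.le
      ((hPc.norm.pow 2).intervalIntegrable _ _) intervalIntegrable_const fun θ _ =>
        pow_le_pow_left₀ (norm_nonneg _) (norm_poissonIntR_le (hmem θ) ?_) 2).trans_eq ?_
    · filter_upwards [hφ.ae_norm_le] with t ht _ using ht
    · rw [intervalIntegral.integral_const, sub_zero, smul_eq_mul]
  have hQ : ∫ θ in (0 : ℝ)..(2 * π), ‖conjPoissonIntR φ (z * exp ((θ : ℂ) * I))‖ ^ 2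
      = ∫ θ in (0 : ℝ)..(2 * π),
        (‖poissonIntR φ (z * exp ((θ : ℂ) * I))‖ ^ 2 - (g (z * exp ((θ : ℂ) * I))).re) :=
    intervalIntegral.integral_congr fun θ _ =>
      norm_sq_conjPoissonIntR (hφ.intervalIntegrable _ _) (hmem θ)
  have hsub := intervalIntegral.integral_sub ((hPc.norm.pow 2).intervalIntegrable 0 (2 * π))
    ((continuous_re.comp hgc).intervalIntegrable (μ := volume) 0 (2 * π))
  simp only [Pi.pow_apply, Function.comp_apply] at hsub
  rw [hQ, hsub, hmean]
  linarith [mul_nonneg Real.two_pi_pos.le hg0]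

end Herglotz

section TruncatedHilbert

/-- The kernel of the truncated Hilbert transform, one period of which is centred at `0`. -/
def truncCot (ε : ℝ) : ℝ → ℝ :=
  (Ioo (-π) π \ Ioo (-ε) ε).indicator fun s => Real.cot (s / 2)

/-- The truncated Hilbert transform, whose limit as `ε ↓ 0` is the principal value in
`IsPVHilbert`. -/
def truncHilbert (ε : ℝ) (φ : ℝ → ℂ) (θ : ℝ) : ℂ :=
  (1 / (2 * π)) * ∫ t in Ioo (θ - π) (θ + π) \ Ioo (θ - ε) (θ + ε),
    φ t / (Real.tan ((θ - t) / 2) : ℂ)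

variable {φ : ℝ → ℂ} {M ε : ℝ} {z : ℂ}

lemma sin_half_ne_zero {s : ℝ} (hs : s ∈ Ioo (-π) π) (h0 : s ≠ 0) : Real.sin (s / 2) ≠ 0 := by
  rw [Ne, Real.sin_eq_zero_iff_of_lt_of_lt (by linarith [hs.1, Real.pi_pos])
    (by linarith [hs.2, Real.pi_pos])]
  exact div_ne_zero h0 two_ne_zero

lemma abs_cot_half_le {s : ℝ} (hs : |s| ≤ π) : |Real.cot (s / 2)| ≤ π / |s| := by
  rcases eq_or_ne s 0 with rfl | h0
  · simp [Real.cot_eq_cos_div_sin]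
  have hsin : |s| / π ≤ |Real.sin (s / 2)| := by
    have h : |s / 2| = |s| / 2 := by rw [abs_div, abs_two]
    refine le_trans (le_of_eq ?_) (Real.mul_abs_le_abs_sin (x := s / 2) (by rw [h]; gcongr))
    rw [h]
    ring
  have hpos : 0 < |s| / π := div_pos (abs_pos.2 h0) Real.pi_pos
  calc |Real.cot (s / 2)| = |Real.cos (s / 2)| / |Real.sin (s / 2)| := by
        rw [Real.cot_eq_cos_div_sin, abs_div]
    _ ≤ 1 / (|s| / π) := div_le_div₀ zero_le_one (Real.abs_cos_le_one _) hpos hsin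
    _ = π / |s| := one_div_div _ _

lemma abs_truncCot_le (hε : 0 < ε) (s : ℝ) : |truncCot ε s| ≤ π / ε := by
  by_cases hs : s ∈ Ioo (-π) π \ Ioo (-ε) ε
  · rw [truncCot, indicator_of_mem hs]
    have hsε : ε ≤ |s| := not_lt.1 fun h => hs.2 (abs_lt.1 h)
    exact (abs_cot_half_le (abs_lt.2 hs.1).le).trans
      (div_le_div_of_nonneg_left Real.pi_pos.le hε hsε)
  · rw [truncCot, indicator_of_notMem hs, abs_zero]
    positivity

lemma truncCot_neg (ε s : ℝ) : truncCot ε (-s) = -truncCot ε s := by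
  have hmem : -s ∈ Ioo (-π) π \ Ioo (-ε) ε ↔ s ∈ Ioo (-π) π \ Ioo (-ε) ε := by
    simp only [Set.mem_sdiff, mem_Ioo, ← abs_lt, abs_neg]
  by_cases hs : s ∈ Ioo (-π) π \ Ioo (-ε) ε
  · rw [truncCot, indicator_of_mem hs, indicator_of_mem (hmem.2 hs), neg_div,
      Real.cot_eq_cos_div_sin, Real.cot_eq_cos_div_sin, Real.cos_neg, Real.sin_neg, div_neg]
  · rw [truncCot, indicator_of_notMem hs, indicator_of_notMem (hmem.not.2 hs), neg_zero]

lemma measurable_truncCot (ε : ℝ) : Measurable (truncCot ε) := by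
  refine Measurable.indicator ?_ (measurableSet_Ioo.diff measurableSet_Ioo)
  simp only [Real.cot_eq_cos_div_sin]
  fun_prop

lemma integrable_truncCot (hε : 0 < ε) : Integrable fun s => (truncCot ε s : ℂ) := by
  have h : IntegrableOn (truncCot ε) (Ioo (-π) π) :=
    Measure.integrableOn_of_bounded (M := π / ε) (by simp)
      (measurable_truncCot ε).aestronglyMeasurable (.of_forall (abs_truncCot_le hε))
  exact (h.integrable_of_forall_notMem_eq_zero fun s hs =>
    indicator_of_notMem (fun hmem => hs hmem.1) _).ofReal

lemma truncHilbert_eq_integral (ε : ℝ) (φ : ℝ → ℂ) (θ : ℝ) :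
    truncHilbert ε φ θ = (1 / (2 * π)) * ∫ s, (truncCot ε s : ℂ) * φ (θ - s) := by
  rw [truncHilbert, ← integral_indicator (measurableSet_Ioo.diff measurableSet_Ioo),
    ← integral_sub_left_eq_self (fun s => (truncCot ε s : ℂ) * φ (θ - s)) volume θ]
  congr 2 with t
  have hmem : t ∈ Ioo (θ - π) (θ + π) \ Ioo (θ - ε) (θ + ε)
      ↔ θ - t ∈ Ioo (-π) π \ Ioo (-ε) ε := by
    simp only [Set.mem_sdiff, mem_Ioo, sub_lt_comm (a := θ), neg_lt_sub_iff_lt_add,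
      and_comm (a := θ - _ < t), add_comm θ, and_comm (a := t < π + θ)]
  by_cases ht : θ - t ∈ Ioo (-π) π \ Ioo (-ε) ε
  · rw [indicator_of_mem (hmem.2 ht), truncCot, indicator_of_mem ht, sub_sub_cancel,
      ← Real.tan_inv_eq_cot, ofReal_inv, div_eq_inv_mul]
  · rw [indicator_of_notMem (hmem.not.2 ht), truncCot, indicator_of_notMem ht, ofReal_zero,
      zero_mul]

lemma norm_one_sub_mul_exp_sq (r s : ℝ) : ‖1 - (r : ℂ) * exp ((s : ℂ) * I)‖ ^ 2
    = (1 - r) ^ 2 + 4 * r * Real.sin (s / 2) ^ 2 := by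
  have hcos : Real.cos s = 1 - 2 * Real.sin (s / 2) ^ 2 := by
    rw [← mul_div_cancel₀ s two_ne_zero, Real.cos_two_mul, Real.cos_sq']
    ring_nf
  rw [← normSq_eq_norm_sq, normSq_apply]
  simp only [sub_re, sub_im, one_re, one_im, re_ofReal_mul, im_ofReal_mul, exp_ofReal_mul_I_re,
    exp_ofReal_mul_I_im]
  linear_combination r ^ 2 * Real.sin_sq_add_cos_sq s - 2 * r * hcos

lemma poissonKer_mul_exp (r s : ℝ) : poissonKer ((r : ℂ) * exp ((s : ℂ) * I))
    = (1 - r ^ 2) / ‖1 - (r : ℂ) * exp ((s : ℂ) * I)‖ ^ 2 := by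
  rw [poissonKer, norm_mul, norm_exp_ofReal_mul_I, mul_one, norm_real, Real.norm_eq_abs, sq_abs]

lemma conjPoissonKer_mul_exp (r s : ℝ) : conjPoissonKer ((r : ℂ) * exp ((s : ℂ) * I))
    = 2 * r * Real.sin s / ‖1 - (r : ℂ) * exp ((s : ℂ) * I)‖ ^ 2 := by
  rw [conjPoissonKer, ← normSq_eq_norm_sq, div_im, ← sub_div]
  simp only [add_re, add_im, sub_re, sub_im, one_re, one_im, re_ofReal_mul, im_ofReal_mul,
    exp_ofReal_mul_I_re, exp_ofReal_mul_I_im]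
  ring

lemma cot_half_sub_conjPoissonKer {r s : ℝ} (hr : (r : ℂ) * exp ((s : ℂ) * I) ≠ 1)
    (hs : Real.sin (s / 2) ≠ 0) :
    Real.cot (s / 2) - conjPoissonKer ((r : ℂ) * exp ((s : ℂ) * I))
      = Real.cot (s / 2) * (1 - r) ^ 2 / ‖1 - (r : ℂ) * exp ((s : ℂ) * I)‖ ^ 2 := by
  have hD : ‖1 - (r : ℂ) * exp ((s : ℂ) * I)‖ ^ 2 ≠ 0 :=
    pow_ne_zero 2 (norm_ne_zero_iff.2 (sub_ne_zero.2 hr.symm))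
  have hsin : Real.sin s = 2 * Real.sin (s / 2) * Real.cos (s / 2) := by
    rw [← Real.sin_two_mul, mul_div_cancel₀ s two_ne_zero]
  rw [conjPoissonKer_mul_exp, eq_div_iff hD, sub_mul, div_mul_cancel₀ _ hD,
    norm_one_sub_mul_exp_sq, hsin, Real.cot_eq_cos_div_sin]
  field_simp
  ring

/-- On `ε ≤ |s| < π` the difference is `O(ε² / (|s| |1 - (1 - ε) e^{is}|²))`; on `|s| < ε` both
sides are of the order of `1 / ε`. -/
lemma abs_truncCot_sub_conjPoissonKer_le (h0 : 0 < ε) (h1 : ε < 1) {s : ℝ} (hs : s ∈ Ioo (-π) π) :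
    |truncCot ε s - conjPoissonKer (((1 - ε : ℝ) : ℂ) * exp ((s : ℂ) * I))|
      ≤ π * poissonKer (((1 - ε : ℝ) : ℂ) * exp ((s : ℂ) * I)) := by
  set w := ((1 - ε : ℝ) : ℂ) * exp ((s : ℂ) * I) with hw
  have hw1 : w ≠ 1 := fun h => by
    have := congrArg norm h
    rw [hw, norm_mul, norm_exp_ofReal_mul_I, norm_one, norm_real, Real.norm_eq_abs,
      abs_of_pos (sub_pos.2 h1)] at this
    linarith
  suffices h : |truncCot ε s - conjPoissonKer w| ≤ π * ε / ‖1 - w‖ ^ 2 by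
    refine h.trans ?_
    rw [hw, poissonKer_mul_exp, ← mul_div_assoc]
    gcongr
    nlinarith
  by_cases hsε : s ∈ Ioo (-ε) ε
  · have hsin : |Real.sin s| ≤ ε := Real.abs_sin_le_abs.trans (abs_lt.2 hsε).le
    rw [truncCot, indicator_of_notMem fun h => h.2 hsε, zero_sub, abs_neg, hw,
      conjPoissonKer_mul_exp, abs_div, abs_of_nonneg (sq_nonneg ‖1 - w‖)]
    gcongr
    rw [abs_mul, abs_of_pos (by linarith : 0 < 2 * (1 - ε))]
    exact mul_le_mul (by linarith [Real.pi_gt_three]) hsin (abs_nonneg _) Real.pi_pos.le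
  · have hcot := abs_truncCot_le h0 s
    rw [truncCot, indicator_of_mem (show s ∈ Ioo (-π) π \ Ioo (-ε) ε from ⟨hs, hsε⟩)] at hcot ⊢
    have hsin := sin_half_ne_zero hs fun h => hsε ⟨h ▸ neg_lt_zero.2 h0, h ▸ h0⟩
    rw [hw, cot_half_sub_conjPoissonKer hw1 hsin, abs_div, abs_of_nonneg (sq_nonneg ‖1 - w‖),
      sub_sub_cancel, abs_mul, abs_of_nonneg (sq_nonneg ε)]
    refine div_le_div_of_nonneg_right ?_ (sq_nonneg _)
    exact (mul_le_mul_of_nonneg_right hcot (sq_nonneg ε)).trans_eq (by field_simp)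

lemma integral_poissonKer_mul_exp (hz : z ∈ ball (0 : ℂ) 1) :
    ∫ s in (-π)..π, poissonKer (z * exp ((s : ℂ) * I)) = 2 * π := by
  have h := kernelInt_eq_integral_reflect (φ := 1) (fun w => (poissonKer w : ℂ)) (fun _ => rfl) z 0
  rw [ofReal_zero, zero_mul, exp_zero, mul_one, ← poissonIntR_eq_kernelInt, poissonIntR_one hz,
    one_div, eq_comm, inv_mul_eq_one₀ (mul_ne_zero two_ne_zero (ofReal_ne_zero.2 Real.pi_ne_zero))]
    at h
  simp only [Pi.one_apply, mul_one, intervalIntegral.integral_ofReal] at h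
  exact_mod_cast h.symm

lemma ofReal_one_sub_mem_ball (hε : ε ∈ Ioo (0 : ℝ) 1) : ((1 - ε : ℝ) : ℂ) ∈ ball (0 : ℂ) 1 := by
  rw [mem_ball_zero_iff, norm_real, Real.norm_of_nonneg (sub_pos.2 hε.2).le]
  exact sub_lt_self 1 hε.1

lemma norm_truncHilbert_sub_conjPoissonIntR_le (hφ : IsBddPeriodic φ M) (h0 : 0 < ε) (h1 : ε < 1)
    (θ : ℝ) :
    ‖truncHilbert ε φ θ - conjPoissonIntR φ (((1 - ε : ℝ) : ℂ) * exp ((θ : ℂ) * I))‖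
      ≤ π * M := by
  have hr := ofReal_one_sub_mem_ball ⟨h0, h1⟩
  have hmem := mul_exp_mul_I_mem_ball hr
  have hφθ := hφ.comp_const_sub θ
  have hle : -π ≤ π := neg_le_self Real.pi_pos.le
  have hH : truncHilbert ε φ θ
      = (1 / (2 * π)) * ∫ s in (-π)..π, (truncCot ε s : ℂ) * φ (θ - s) := by
    rw [truncHilbert_eq_integral, intervalIntegral.integral_of_le hle,
      setIntegral_eq_integral_of_forall_compl_eq_zero fun s hs => ?_]
    rw [truncCot, indicator_of_notMem fun h => hs (Ioo_subset_Ioc_self h.1), ofReal_zero, zero_mul]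
  have hQ := kernelInt_eq_integral_reflect (fun w => (conjPoissonKer w : ℂ)) hφ.periodic
    ((1 - ε : ℝ) : ℂ) θ
  have hQi : IntervalIntegrable (fun s : ℝ =>
      (conjPoissonKer (((1 - ε : ℝ) : ℂ) * exp ((s : ℂ) * I)) : ℂ) * φ (θ - s)) volume (-π) π :=
    (hφθ.intervalIntegrable _ _).continuousOn_mul
      (continuousOn_ofReal_conjPoissonKer.comp_continuous (by fun_prop) hmem).continuousOn
  have hPc : Continuous fun s : ℝ => poissonKer (((1 - ε : ℝ) : ℂ) * exp ((s : ℂ) * I)) :=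
    continuous_re.comp (continuousOn_ofReal_poissonKer.comp_continuous (by fun_prop) hmem)
  have hbound : ‖∫ s in (-π)..π, ((truncCot ε s : ℂ) * φ (θ - s)
      - (conjPoissonKer (((1 - ε : ℝ) : ℂ) * exp ((s : ℂ) * I)) : ℂ) * φ (θ - s))‖
      ≤ ∫ s in (-π)..π, poissonKer (((1 - ε : ℝ) : ℂ) * exp ((s : ℂ) * I)) * (π * M) := by
    refine intervalIntegral.norm_integral_le_of_norm_le hle ?_
      ((hPc.mul continuous_const).intervalIntegrable _ _)
    filter_upwards [hφθ.ae_norm_le, compl_mem_ae_iff.2 (measure_singleton π)] with s hs hsπ hmem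
    have hker := abs_truncCot_sub_conjPoissonKer_le h0 h1 ⟨hmem.1, lt_of_le_of_ne hmem.2 hsπ⟩
    rw [← sub_mul, norm_mul, ← ofReal_sub, norm_real, mul_left_comm, ← mul_assoc]
    exact mul_le_mul hker hs (norm_nonneg _) ((abs_nonneg _).trans hker)
  rw [intervalIntegral.integral_mul_const, integral_poissonKer_mul_exp hr] at hbound
  rw [hH, conjPoissonIntR_eq_kernelInt, hQ, ← mul_sub, ← intervalIntegral.integral_sub
    ((hφθ.integrable_mul (integrable_truncCot h0)).intervalIntegrable) hQi, norm_mul,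
    norm_one_div_two_pi, one_div, inv_mul_le_iff₀ Real.two_pi_pos]
  exact hbound

end TruncatedHilbert

section Multiplier

variable {A : ℂ → ℂ} {φ : ℝ → ℂ} {M ε : ℝ} {z : ℂ}

lemma tendsto_setIntegral_sdiff_Ioo {g : ℝ → ℂ} {S : Set ℝ} (hg : IntegrableOn g S) :
    Tendsto (fun ε : ℝ => ∫ s in S \ Ioo (-ε) ε, g s) (𝓝[>] 0) (𝓝 (∫ s in S, g s)) := by
  have hvol : Tendsto (fun ε : ℝ => volume.restrict S (Ioo (-ε) ε)) (𝓝[>] 0) (𝓝 0) := by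
    refine tendsto_of_tendsto_of_tendsto_of_le_of_le tendsto_const_nhds (h := fun ε =>
      ENNReal.ofReal (ε - -ε)) ?_ (fun _ => zero_le) fun ε =>
        (Measure.restrict_apply_le _ _).trans Real.volume_Ioo.le
    have h : Tendsto (fun ε : ℝ => ε - -ε) (𝓝 0) (𝓝 0) := by
      simpa using (by fun_prop : Continuous fun ε : ℝ => ε - -ε).tendsto 0
    simpa using (ENNReal.tendsto_ofReal h).mono_left nhdsWithin_le_nhds
  have hzero := hg.tendsto_setIntegral_nhds_zero hvol
  simp only [Measure.restrict_restrict measurableSet_Ioo] at hzero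
  refine (sub_zero (∫ s in S, g s) ▸ hzero.const_sub _).congr fun ε => ?_
  rw [← integral_inter_add_sdiff (t := Ioo (-ε) ε) measurableSet_Ioo hg, inter_comm,
    add_sub_cancel_left]

lemma cot_half_mul_exp_sub_one {s : ℝ} (hs : Real.sin (s / 2) ≠ 0) :
    (Real.cot (s / 2) : ℂ) * (exp (-(s : ℂ) * I) - 1) = -I * (1 + exp (-(s : ℂ) * I)) := by
  have hexp : exp (-(s : ℂ) * I) = (Real.cos (s / 2) - Real.sin (s / 2) * I) ^ 2 := by
    rw [show -(s : ℂ) * I = (2 : ℕ) * ((-(s / 2) : ℝ) * I) by push_cast; ring, exp_nat_mul,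
      exp_mul_I, ← ofReal_cos, ← ofReal_sin, Real.cos_neg, Real.sin_neg, ofReal_neg, neg_mul,
      ← sub_eq_add_neg]
  have hsq : (Real.sin (s / 2) : ℂ) ^ 2 + (Real.cos (s / 2) : ℂ) ^ 2 = 1 :=
    mod_cast Real.sin_sq_add_cos_sq (s / 2)
  rw [hexp, Real.cot_eq_cos_div_sin, ofReal_div, div_mul_eq_mul_div,
    div_eq_iff (ofReal_ne_zero.2 hs)]
  generalize (Real.sin (s / 2) : ℂ) = σ at *
  generalize (Real.cos (s / 2) : ℂ) = c at *
  linear_combination (c - σ * I) * hsq - (c - σ * I) * σ ^ 2 * I_sq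

lemma integral_truncCot (ε : ℝ) : ∫ s, (truncCot ε s : ℂ) = 0 := by
  have h := integral_neg_eq_self (fun s => (truncCot ε s : ℂ)) volume
  simp only [truncCot_neg, ofReal_neg, integral_neg] at h
  exact self_eq_neg.1 h.symm

lemma truncCot_mul_sub (A : ℂ → ℂ) (z : ℂ) (hε : 0 < ε) (s : ℝ) :
    (truncCot ε s : ℂ) * (A (z * exp (-(s : ℂ) * I)) - A z)
      = (Ioo (-π) π \ Ioo (-ε) ε).indicator (fun s : ℝ => -I * ((z + z * exp (-(s : ℂ) * I))
        * dslope A z (z * exp (-(s : ℂ) * I)))) s := by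
  by_cases hs : s ∈ Ioo (-π) π \ Ioo (-ε) ε
  · have hs0 : s ≠ 0 := fun h => hs.2 ⟨h ▸ neg_lt_zero.2 hε, h ▸ hε⟩
    rw [truncCot, indicator_of_mem hs, indicator_of_mem hs, ← sub_smul_dslope A z, smul_eq_mul]
    linear_combination z * dslope A z (z * exp (-(s : ℂ) * I))
      * cot_half_mul_exp_sub_one (sin_half_ne_zero hs.1 hs0)
  · rw [truncCot, indicator_of_notMem hs, indicator_of_notMem hs, ofReal_zero, zero_mul]

/-- Since `cot (s / 2) (e^{-is} - 1) = -i (1 + e^{-is})`, subtracting `A z` turns the singular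
integral into the mean over a circle of the holomorphic function
`w ↦ -i (z + w) (A w - A z) / (w - z)`, whose value at the centre is the limit. -/
lemma tendsto_integral_truncCot_mul (hA : DifferentiableOn ℂ A (ball 0 1))
    (hz : z ∈ ball (0 : ℂ) 1) :
    Tendsto (fun ε => (1 / (2 * π)) * ∫ s, (truncCot ε s : ℂ) * A (z * exp (-(s : ℂ) * I)))
      (𝓝[>] 0) (𝓝 (-I * (A z - A 0))) := by
  let g : ℂ → ℂ := fun w => -I * ((z + w) * dslope A z w)
  have hg : DifferentiableOn ℂ g (ball 0 1) :=
    ((differentiableOn_id.const_add z).mul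
      ((differentiableOn_dslope (isOpen_ball.mem_nhds hz)).2 hA)).const_mul _
  have hg0 : g 0 = -I * (A z - A 0) := by
    have h := sub_smul_dslope A z 0
    rw [smul_eq_mul] at h
    simp only [g, add_zero]
    linear_combination I * h
  obtain ⟨N, hbdd⟩ := exists_isBddPeriodic_of_continuous
    (continuous_comp_mul_exp_neg_mul_I hA.continuousOn hz) (periodic_mul_exp_neg_mul_I A z)
  have hgc := continuous_comp_mul_exp_neg_mul_I hg.continuousOn hz
  have hlim := (tendsto_setIntegral_sdiff_Ioo (S := Ioo (-π) π)
    (hgc.integrableOn_Icc.mono_set Ioo_subset_Icc_self)).const_mul (1 / (2 * π) : ℂ)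
  have hmean := kernelInt_one_of_differentiableOn hg hz
  rw [kernelInt_eq_integral_add g (fun _ => rfl) z (-π), two_mul π, neg_add_cancel_left,
    intervalIntegral.integral_of_le (neg_le_self Real.pi_pos.le), integral_Ioc_eq_integral_Ioo]
    at hmean
  simp only [Pi.one_apply, mul_one] at hmean
  rw [← hg0, ← hmean]
  refine hlim.congr' ?_
  filter_upwards [self_mem_nhdsWithin] with ε hε
  have hcot := integrable_truncCot hε
  have hcotA : Integrable fun s => (truncCot ε s : ℂ) * A (z * exp (-(s : ℂ) * I)) :=
    hbdd.integrable_mul hcot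
  have hsub : ∫ s, (truncCot ε s : ℂ) * A (z * exp (-(s : ℂ) * I))
      = ∫ s, (truncCot ε s : ℂ) * (A (z * exp (-(s : ℂ) * I)) - A z) := by
    simp only [mul_sub]
    rw [integral_sub hcotA (hcot.mul_const _), integral_mul_const, integral_truncCot, zero_mul,
      sub_zero]
  rw [hsub, ← integral_indicator (measurableSet_Ioo.diff measurableSet_Ioo)]
  simp only [truncCot_mul_sub A z hε, g]

lemma truncHilbert_eq_convolution (ε : ℝ) (φ : ℝ → ℂ) :
    truncHilbert ε φ = fun θ => ∫ s, (1 / (2 * π) * truncCot ε s) * φ (θ - s) := by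
  ext θ
  simp only [truncHilbert_eq_integral, ← integral_const_mul, mul_assoc]

lemma isBddPeriodic_truncHilbert (hφ : IsBddPeriodic φ M) (hε : 0 < ε) :
    IsBddPeriodic (truncHilbert ε φ) ((∫ s, ‖(1 / (2 * π) * truncCot ε s : ℂ)‖) * M) := by
  rw [truncHilbert_eq_convolution]
  exact hφ.convolution ((integrable_truncCot hε).const_mul _)

lemma truncHilbert_conj (ε : ℝ) (φ : ℝ → ℂ) :
    truncHilbert ε (conj φ) = conj (truncHilbert ε φ) := by
  ext θ
  simp only [truncHilbert, Pi.conj_apply, map_mul, map_div₀, map_one, conj_ofReal,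
    Complex.conj_ofNat, ← integral_conj]

lemma herglotzInt_truncHilbert (hφ : IsBddPeriodic φ M) (hε : 0 < ε) (hz : z ∈ ball (0 : ℂ) 1) :
    herglotzInt (truncHilbert ε φ) z
      = (1 / (2 * π)) * ∫ s, (truncCot ε s : ℂ) * herglotzInt φ (z * exp (-(s : ℂ) * I)) := by
  rw [herglotzInt, truncHilbert_eq_convolution, kernelInt_convolution
    differentiableOn_herglotzKer.continuousOn hφ ((integrable_truncCot hε).const_mul _) hz,
    ← integral_const_mul]
  simp only [mul_assoc, herglotzInt]

lemma tendsto_herglotzInt_truncHilbert (hφ : IsBddPeriodic φ M) (hz : z ∈ ball (0 : ℂ) 1) :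
    Tendsto (fun ε => herglotzInt (truncHilbert ε φ) z) (𝓝[>] 0)
      (𝓝 (-I * (herglotzInt φ z - herglotzInt φ 0))) := by
  refine (tendsto_integral_truncCot_mul (differentiableOn_herglotzInt hφ) hz).congr' ?_
  filter_upwards [self_mem_nhdsWithin] with ε hε
  exact (herglotzInt_truncHilbert hφ hε hz).symm

lemma tendsto_poissonIntR_truncHilbert (hφ : IsBddPeriodic φ M) (hz : z ∈ ball (0 : ℂ) 1) :
    Tendsto (fun ε => poissonIntR (truncHilbert ε φ) z) (𝓝[>] 0)
      (𝓝 (conjPoissonIntR φ z)) := by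
  have hlim := ((tendsto_herglotzInt_truncHilbert hφ hz).add ((continuous_conj.tendsto _).comp
    (tendsto_herglotzInt_truncHilbert hφ.conj hz))).div_const 2
  have hval : (-I * (herglotzInt φ z - herglotzInt φ 0) + conj (-I * (herglotzInt (conj φ) z
      - herglotzInt (conj φ) 0))) / 2 = conjPoissonIntR φ z := by
    rw [conjPoissonIntR_eq_herglotzInt (hφ.intervalIntegrable _ _) hz, herglotzInt_conj_zero,
      eq_div_iff (mul_ne_zero two_ne_zero I_ne_zero)]
    simp only [map_mul, map_sub, map_neg, conj_I, conj_conj, neg_neg]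
    linear_combination (conj (herglotzInt (conj φ) z) - herglotzInt φ z) * I_sq
  rw [hval] at hlim
  refine hlim.congr' ?_
  filter_upwards [self_mem_nhdsWithin] with ε hε
  rw [poissonIntR_eq_herglotzInt ((isBddPeriodic_truncHilbert hφ hε).intervalIntegrable _ _) hz,
    Function.comp_apply, truncHilbert_conj]

end Multiplier

section UniformIntegrability

lemma uniformIntegrable_of_eLpNorm_le {α ι β : Type*} [MeasurableSpace α] [NormedAddCommGroup β]
    {μ : Measure α} [IsFiniteMeasure μ] {p q : ℝ≥0∞} (hp : p ≠ 0) (hpq : p < q) {f : ι → α → β}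
    (hf : ∀ i, AEStronglyMeasurable (f i) μ) {C : ℝ≥0} (hC : ∀ i, eLpNorm (f i) q μ ≤ C) :
    UniformIntegrable f p μ := by
  set e := 1 / p.toReal - 1 / q.toReal
  have he : 0 < e := by
    have hlt := ENNReal.toReal_strict_mono (ENNReal.inv_ne_top.2 hp) (ENNReal.inv_lt_inv.2 hpq)
    rw [ENNReal.toReal_inv, ENNReal.toReal_inv, ← one_div, ← one_div] at hlt
    exact sub_pos.2 hlt
  have hle (i : ι) (s : Set α) : eLpNorm (f i) p (μ.restrict s) ≤ C * μ s ^ e := by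
    have h := eLpNorm_le_eLpNorm_mul_rpow_measure_univ hpq.le (hf i).restrict (μ := μ.restrict s)
    rw [Measure.restrict_apply_univ] at h
    refine h.trans ?_
    gcongr
    exact (eLpNorm_restrict_le ..).trans (hC i)
  have hlim : Tendsto (fun x : ℝ≥0∞ => C * x ^ e) (𝓝 0) (𝓝 0) := by
    have h := ENNReal.Tendsto.const_mul ((ENNReal.continuous_rpow_const (y := e)).tendsto 0)
      (Or.inr (ENNReal.coe_ne_top (r := C)))
    rwa [ENNReal.zero_rpow_of_pos he, mul_zero] at h
  refine ⟨hf, fun ε hε => ?_, (C * μ univ ^ e).toNNReal, fun i => ?_⟩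
  · obtain ⟨δ, hδ, hδε⟩ := ENNReal.nhds_zero_basis_Iic.eventually_iff.1
      (hlim.eventually_le_const (ENNReal.ofReal_pos.2 hε))
    refine ⟨(min δ 1).toReal, ENNReal.toReal_pos (lt_min hδ one_pos).ne'
      (min_lt_of_right_lt ENNReal.one_lt_top).ne, fun i s hs hμs => ?_⟩
    rw [ENNReal.ofReal_toReal (min_lt_of_right_lt ENNReal.one_lt_top).ne] at hμs
    rw [eLpNorm_indicator_eq_eLpNorm_restrict hs]
    exact (hle i s).trans (hδε (hμs.trans (min_le_left _ _)))
  · have hfin : (C * μ univ ^ e : ℝ≥0∞) ≠ ∞ := ENNReal.mul_ne_top ENNReal.coe_ne_top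
      (ENNReal.rpow_ne_top_of_nonneg he.le (measure_ne_top μ univ))
    rw [ENNReal.coe_toNNReal hfin, ← Measure.restrict_univ (μ := μ)]
    simpa only [Measure.restrict_univ] using hle i univ

lemma tendsto_kernelInt_of_tendsto_eLpNorm {ι : Type*} {l : Filter ι} {k : ℂ → ℂ} {z : ℂ}
    {ψ : ι → ℝ → ℂ} {φ : ℝ → ℂ} (hk : ContinuousOn k (ball 0 1)) (hz : z ∈ ball (0 : ℂ) 1)
    (hψ : ∀ i, IntegrableOn (ψ i) (Ioc 0 (2 * π))) (hφ : IntegrableOn φ (Ioc 0 (2 * π)))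
    (h : Tendsto (fun i => eLpNorm (ψ i - φ) 1 (volume.restrict (Ioc 0 (2 * π)))) l (𝓝 0)) :
    Tendsto (fun i => kernelInt k (ψ i) z) l (𝓝 (kernelInt k φ z)) := by
  have hkz := continuous_comp_mul_exp_neg_mul_I hk hz
  obtain ⟨C, hC⟩ := isCompact_Icc.exists_bound_of_continuousOn
    (hkz.continuousOn (s := Icc 0 (2 * π)))
  have hCae : ∀ᵐ t : ℝ ∂volume.restrict (Ioc 0 (2 * π)), ‖k (z * exp (-(t : ℂ) * I))‖ ≤ C :=
    ae_restrict_of_forall_mem measurableSet_Ioc fun t ht => hC t (Ioc_subset_Icc_self ht)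
  have hint {χ : ℝ → ℂ} (hχ : Integrable χ (volume.restrict (Ioc 0 (2 * π)))) :
      IntegrableOn (fun t : ℝ => k (z * exp (-(t : ℂ) * I)) * χ t) (Ioc 0 (2 * π)) :=
    hχ.bdd_mul hkz.aestronglyMeasurable hCae
  simp only [kernelInt, intervalIntegral.integral_of_le Real.two_pi_pos.le]
  refine (tendsto_integral_of_L1' _ (hint hφ).aestronglyMeasurable
    (.of_forall fun i => hint (hψ i)) ?_).const_mul _
  have hCh := ENNReal.Tendsto.const_mul h (Or.inr (ENNReal.ofReal_ne_top (r := C)))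
  rw [mul_zero] at hCh
  refine tendsto_of_tendsto_of_tendsto_of_le_of_le tendsto_const_nhds hCh (fun _ => zero_le)
    fun i => eLpNorm_le_mul_eLpNorm_of_ae_le_mul ?_ 1
  filter_upwards [hCae] with t ht
  simp only [Pi.sub_apply]
  rw [← mul_sub, norm_mul]
  gcongr

end UniformIntegrability

section Hilbert

variable {φ HF : ℝ → ℂ} {M ε : ℝ} {z : ℂ}

lemma eLpNorm_two_conjPoissonIntR_le (hφ : IsBddPeriodic φ M) (hz : z ∈ ball (0 : ℂ) 1) :
    eLpNorm (fun θ : ℝ => conjPoissonIntR φ (z * exp ((θ : ℂ) * I))) 2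
      (volume.restrict (Ioc 0 (2 * π))) ≤ ENNReal.ofReal (√(2 * π * M ^ 2)) := by
  have hc : Continuous fun θ : ℝ => conjPoissonIntR φ (z * exp ((θ : ℂ) * I)) :=
    (continuousOn_conjPoissonIntR hφ).comp_continuous (by fun_prop) (mul_exp_mul_I_mem_ball hz)
  have hL2 : MemLp (fun θ : ℝ => conjPoissonIntR φ (z * exp ((θ : ℂ) * I))) 2
      (volume.restrict (Ioc 0 (2 * π))) :=
    (memLp_two_iff_integrable_sq_norm hc.aestronglyMeasurable).2
      ((hc.norm.pow 2).integrableOn_Icc.mono_set Ioc_subset_Icc_self)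
  rw [hL2.eLpNorm_eq_integral_rpow_norm two_ne_zero ENNReal.ofNat_ne_top]
  simp only [ENNReal.toReal_ofNat, Real.rpow_two, ← one_div, ← Real.sqrt_eq_rpow]
  rw [← intervalIntegral.integral_of_le Real.two_pi_pos.le]
  gcongr
  exact integral_norm_sq_conjPoissonIntR_le hφ hz

lemma exists_eLpNorm_two_truncHilbert_le (hφ : IsBddPeriodic φ M) :
    ∃ C : ℝ≥0, ∀ ε ∈ Ioo (0 : ℝ) 1,
      eLpNorm (truncHilbert ε φ) 2 (volume.restrict (Ioc 0 (2 * π))) ≤ C := by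
  set μ := volume.restrict (Ioc 0 (2 * π))
  have hfin : μ univ ^ (2 : ℝ≥0∞).toReal⁻¹ * ENNReal.ofReal (π * M)
      + ENNReal.ofReal (√(2 * π * M ^ 2)) ≠ ∞ := by finiteness
  refine ⟨_, fun ε hε => le_trans ?_ (ENNReal.coe_toNNReal hfin).ge⟩
  have hr := ofReal_one_sub_mem_ball hε
  set Q := fun θ : ℝ => conjPoissonIntR φ (((1 - ε : ℝ) : ℂ) * exp ((θ : ℂ) * I))
  have hQ : Continuous Q :=
    (continuousOn_conjPoissonIntR hφ).comp_continuous (by fun_prop) (mul_exp_mul_I_mem_ball hr)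
  have hH := (isBddPeriodic_truncHilbert hφ hε.1).aestronglyMeasurable.restrict (s := Ioc 0 (2 * π))
  calc eLpNorm (truncHilbert ε φ) 2 μ = eLpNorm (truncHilbert ε φ - Q + Q) 2 μ := by
        rw [sub_add_cancel]
    _ ≤ eLpNorm (truncHilbert ε φ - Q) 2 μ + eLpNorm Q 2 μ :=
        eLpNorm_add_le (hH.sub hQ.aestronglyMeasurable) hQ.aestronglyMeasurable one_le_two
    _ ≤ _ := add_le_add (eLpNorm_le_of_ae_bound (.of_forall fun θ =>
        norm_truncHilbert_sub_conjPoissonIntR_le hφ hε.1 hε.2 θ))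
        (eLpNorm_two_conjPoissonIntR_le hφ hr)

lemma uniformIntegrable_truncHilbert (hφ : IsBddPeriodic φ M) {ι : Type*} {u : ι → ℝ}
    (hu : ∀ i, u i ∈ Ioo 0 1) : UniformIntegrable (fun i => truncHilbert (u i) φ) 1
      (volume.restrict (Ioc 0 (2 * π))) := by
  obtain ⟨C, hC⟩ := exists_eLpNorm_two_truncHilbert_le hφ
  exact uniformIntegrable_of_eLpNorm_le one_ne_zero ENNReal.one_lt_two (fun i =>
    (isBddPeriodic_truncHilbert hφ (hu i).1).aestronglyMeasurable.restrict) fun i => hC _ (hu i)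

lemma exists_seq_tendsto_truncHilbert (hHF : ∀ᵐ θ : ℝ, IsPVHilbert φ θ (HF θ)) :
    ∃ u : ℕ → ℝ, (∀ n, u n ∈ Ioo 0 1) ∧ Tendsto u atTop (𝓝[>] 0) ∧
      ∀ᵐ θ, Tendsto (fun n => truncHilbert (u n) φ θ) atTop (𝓝 (HF θ)) := by
  obtain ⟨u, -, hu, hlim⟩ := exists_seq_strictAnti_tendsto' (zero_lt_one' ℝ)
  have hlim' := tendsto_nhdsWithin_iff.2 ⟨hlim, .of_forall fun n => (hu n).1⟩
  exact ⟨u, hu, hlim', hHF.mono fun θ hθ => hθ.comp hlim'⟩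

lemma integrableOn_of_isPVHilbert (hφ : IsBddPeriodic φ M)
    (hHF : ∀ᵐ θ : ℝ, IsPVHilbert φ θ (HF θ)) : IntegrableOn HF (Ioc 0 (2 * π)) := by
  obtain ⟨u, hu, -, hlim⟩ := exists_seq_tendsto_truncHilbert hHF
  exact (uniformIntegrable_truncHilbert hφ hu).integrable_of_ae_tendsto (ae_restrict_of_ae hlim)

/-- Uniform integrability of the truncations lets Vitali's theorem exchange the principal-value
limit with the Poisson integral. -/
lemma poissonIntR_eq_conjPoissonIntR_of_isPVHilbert (hφ : IsBddPeriodic φ M)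
    (hHF : ∀ᵐ θ : ℝ, IsPVHilbert φ θ (HF θ)) (hz : z ∈ ball (0 : ℂ) 1) :
    poissonIntR HF z = conjPoissonIntR φ z := by
  obtain ⟨u, hu, hu0, hlim⟩ := exists_seq_tendsto_truncHilbert hHF
  have hUI := uniformIntegrable_truncHilbert hφ hu
  have hint := integrableOn_of_isPVHilbert hφ hHF
  have hL1 := tendsto_Lp_finite_of_tendsto_ae le_rfl ENNReal.one_ne_top hUI.1
    (memLp_one_iff_integrable.2 hint) hUI.2.1 (ae_restrict_of_ae hlim)
  have hP : Tendsto (fun n => poissonIntR (truncHilbert (u n) φ) z) atTop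
      (𝓝 (poissonIntR HF z)) := by
    simp only [poissonIntR_eq_kernelInt]
    exact tendsto_kernelInt_of_tendsto_eLpNorm continuousOn_ofReal_poissonKer hz
      (fun n => memLp_one_iff_integrable.1 (hUI.memLp n)) hint hL1
  exact tendsto_nhds_unique hP ((tendsto_poissonIntR_truncHilbert hφ hz).comp hu0)

lemma memLpT_top_iff_bounded_conjPoissonIntR (hφ : IsBddPeriodic φ M)
    (hHF : ∀ᵐ θ : ℝ, IsPVHilbert φ θ (HF θ)) :
    MemLpT ⊤ HF ↔ ∃ K, ∀ z ∈ ball (0 : ℂ) 1, ‖conjPoissonIntR φ z‖ ≤ K := by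
  constructor
  · intro hL
    refine ⟨lpNorm HF ⊤ (volume.restrict (Ioc 0 (2 * π))), fun z hz => ?_⟩
    rw [← poissonIntR_eq_conjPoissonIntR_of_isPVHilbert hφ hHF hz]
    exact norm_poissonIntR_le hz
      ((ae_restrict_iff' measurableSet_Ioc).1 (ae_le_lpNorm_exponent_top hL))
  · rintro ⟨K, hK⟩
    obtain ⟨u, hu, -, hlim⟩ := exists_seq_tendsto_truncHilbert hHF
    refine memLp_top_of_bound (integrableOn_of_isPVHilbert hφ hHF).aestronglyMeasurable
      (π * M + K) (ae_restrict_of_ae (hlim.mono fun θ hθ => ?_))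
    refine le_of_tendsto hθ.norm (.of_forall fun n => ?_)
    have hQ := hK _ (mul_exp_mul_I_mem_ball (ofReal_one_sub_mem_ball (hu n)) θ)
    have hHQ := norm_truncHilbert_sub_conjPoissonIntR_le hφ (hu n).1 (hu n).2 θ
    linarith [norm_le_norm_sub_add (truncHilbert (u n) φ θ)
      (conjPoissonIntR φ (((1 - u n : ℝ) : ℂ) * exp ((θ : ℂ) * I)))]

end Hilbert

section Wirtinger

variable {f a b : ℂ → ℂ} {a' b' z : ℂ} {φ G : ℝ → ℂ} {M N : ℝ}

lemma fderiv_eq_of_eventuallyEq_add_conj (ha : HasDerivAt a a' z) (hb : HasDerivAt b b' z)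
    (hf : f =ᶠ[𝓝 z] fun w => a w + conj (b w)) (v : ℂ) :
    fderiv ℝ f z v = a' * v + conj (b' * v) := by
  have hderiv := (ha.hasFDerivAt.restrictScalars ℝ).add
    ((conjCLE : ℂ →L[ℝ] ℂ).hasFDerivAt.comp z (hb.hasFDerivAt.restrictScalars ℝ))
  rw [(hderiv.congr_of_eventuallyEq hf).fderiv]
  simp [mul_comm]

lemma wdz_eq_of_eventuallyEq_add_conj (ha : HasDerivAt a a' z) (hb : HasDerivAt b b' z)
    (hf : f =ᶠ[𝓝 z] fun w => a w + conj (b w)) : wdz f z = a' := by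
  simp only [wdz, fderiv_eq_of_eventuallyEq_add_conj ha hb hf, mul_one, map_mul, conj_I]
  linear_combination (-(1 / 2) * a' + 1 / 2 * conj b') * I_sq

lemma wdzb_eq_of_eventuallyEq_add_conj (ha : HasDerivAt a a' z) (hb : HasDerivAt b b' z)
    (hf : f =ᶠ[𝓝 z] fun w => a w + conj (b w)) : wdzb f z = conj b' := by
  simp only [wdzb, fderiv_eq_of_eventuallyEq_add_conj ha hb hf, mul_one, map_mul, conj_I]
  linear_combination (1 / 2 * a' - 1 / 2 * conj b') * I_sq

lemma hasDerivAt_herglotzInt_div_two (hG : IsBddPeriodic G N) (hz : z ∈ ball (0 : ℂ) 1) :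
    HasDerivAt (fun w => herglotzInt G w / 2) (deriv (herglotzInt G) z / 2) z :=
  ((differentiableOn_herglotzInt hG).differentiableAt
    (isOpen_ball.mem_nhds hz)).hasDerivAt.div_const 2

lemma poissonIntR_eventuallyEq_add_conj (hG : IsBddPeriodic G N) (hz : z ∈ ball (0 : ℂ) 1) :
    poissonIntR G =ᶠ[𝓝 z]
      fun w => herglotzInt G w / 2 + conj (herglotzInt (conj G) w / 2) := by
  filter_upwards [isOpen_ball.mem_nhds hz] with w hw
  rw [poissonIntR_eq_herglotzInt (hG.intervalIntegrable _ _) hw, map_div₀, Complex.conj_ofNat,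
    add_div]

lemma wdz_poissonIntR (hG : IsBddPeriodic G N) (hz : z ∈ ball (0 : ℂ) 1) :
    wdz (poissonIntR G) z = deriv (herglotzInt G) z / 2 :=
  wdz_eq_of_eventuallyEq_add_conj (hasDerivAt_herglotzInt_div_two hG hz)
    (hasDerivAt_herglotzInt_div_two hG.conj hz) (poissonIntR_eventuallyEq_add_conj hG hz)

lemma conj_wdzb_poissonIntR (hG : IsBddPeriodic G N) (hz : z ∈ ball (0 : ℂ) 1) :
    conj (wdzb (poissonIntR G) z) = deriv (herglotzInt (conj G)) z / 2 := by
  rw [wdzb_eq_of_eventuallyEq_add_conj (hasDerivAt_herglotzInt_div_two hG hz)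
    (hasDerivAt_herglotzInt_div_two hG.conj hz) (poissonIntR_eventuallyEq_add_conj hG hz),
    conj_conj]

lemma two_mul_I_mul_mul_wdz_poissonIntR (hφ : IsBddPeriodic φ M) (hG : IsBddPeriodic G N)
    (hGφ : ∀ a b, ∫ t in a..b, φ t = G b - G a) (hz : z ∈ ball (0 : ℂ) 1) :
    2 * I * z * wdz (poissonIntR G) z = herglotzInt φ z := by
  rw [wdz_poissonIntR hG hz, ← I_mul_mul_deriv_herglotzInt hφ hG hGφ hz]
  ring

lemma two_mul_I_mul_mul_conj_wdzb_poissonIntR (hφ : IsBddPeriodic φ M) (hG : IsBddPeriodic G N)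
    (hGφ : ∀ a b, ∫ t in a..b, φ t = G b - G a) (hz : z ∈ ball (0 : ℂ) 1) :
    2 * I * z * conj (wdzb (poissonIntR G) z) = herglotzInt (conj φ) z := by
  have hGφ_conj (a b : ℝ) : ∫ t in a..b, (conj φ) t = (conj G) b - (conj G) a := by
    simp only [Pi.conj_apply, intervalIntegral.intervalIntegral_conj, hGφ, map_sub]
  rw [conj_wdzb_poissonIntR hG hz, ← I_mul_mul_deriv_herglotzInt hφ.conj hG.conj hGφ_conj hz]
  ring

end Wirtinger

section HInf

variable {φ G : ℝ → ℂ} {M N : ℝ}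

lemma memHinf_iff_bounded_of_mul_eq {g A : ℂ → ℂ} {c : ℂ} (hc : c ≠ 0)
    (hg : DifferentiableOn ℂ g (ball 0 1)) (hA : ∀ z ∈ ball (0 : ℂ) 1, c * z * g z = A z) :
    MemHinf g ↔ ∃ K, ∀ z ∈ ball (0 : ℂ) 1, ‖A z‖ ≤ K := by
  constructor
  · rintro ⟨-, K, hK⟩
    refine ⟨‖c‖ * K, fun z hz => ?_⟩
    rw [← hA z hz, norm_mul, norm_mul, mul_assoc]
    gcongr
    exact (mul_le_of_le_one_left (norm_nonneg _) (mem_ball_zero_iff.1 hz).le).trans (hK z hz)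
  · rintro ⟨K, hK⟩
    obtain ⟨C, hC⟩ := (isCompact_closedBall (0 : ℂ) (1 / 2)).exists_bound_of_continuousOn
      (hg.continuousOn.mono (closedBall_subset_ball one_half_lt_one))
    refine ⟨hg, max C (2 * K / ‖c‖), fun z hz => ?_⟩
    by_cases hz2 : z ∈ closedBall (0 : ℂ) (1 / 2)
    · exact le_max_of_le_left (hC z hz2)
    · rw [mem_closedBall_zero_iff, not_le] at hz2
      have hAz := hK z hz
      rw [← hA z hz, norm_mul, norm_mul] at hAz
      refine le_max_of_le_right ((le_div_iff₀ (norm_pos_iff.2 hc)).2 ?_)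
      nlinarith [mul_nonneg (norm_nonneg c) (norm_nonneg (g z))]

lemma bounded_herglotzInt_iff (hφ : IsBddPeriodic φ M) :
    (∃ K, ∀ z ∈ ball (0 : ℂ) 1, ‖herglotzInt φ z‖ ≤ K) ↔
      ∃ K, ∀ z ∈ ball (0 : ℂ) 1, ‖conjPoissonIntR φ z‖ ≤ K := by
  have hP (z : ℂ) (hz : z ∈ ball (0 : ℂ) 1) : ‖poissonIntR φ z‖ ≤ M :=
    norm_poissonIntR_le hz (hφ.ae_norm_le.mono fun _ ht _ => ht)
  have hPQ (z : ℂ) (hz : z ∈ ball (0 : ℂ) 1) := herglotzInt_eq (hφ.intervalIntegrable _ _) hz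
  have hI (w : ℂ) : ‖I * w‖ = ‖w‖ := by rw [norm_mul, norm_I, one_mul]
  refine ⟨fun ⟨K, hK⟩ => ⟨K + M, fun z hz => ?_⟩, fun ⟨K, hK⟩ => ⟨M + K, fun z hz => ?_⟩⟩
  · rw [← hI, ← sub_eq_of_eq_add' (hPQ z hz)]
    exact norm_sub_le_of_le (hK z hz) (hP z hz)
  · rw [hPQ z hz]
    exact norm_add_le_of_le (hP z hz) ((hI _).trans_le (hK z hz))

lemma memHinf_wdz_poissonIntR_iff (hφ : IsBddPeriodic φ M) (hG : IsBddPeriodic G N)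
    (hGφ : ∀ a b, ∫ t in a..b, φ t = G b - G a) :
    MemHinf (wdz (poissonIntR G)) ↔ ∃ K, ∀ z ∈ ball (0 : ℂ) 1, ‖conjPoissonIntR φ z‖ ≤ K := by
  rw [← bounded_herglotzInt_iff hφ]
  exact memHinf_iff_bounded_of_mul_eq (mul_ne_zero two_ne_zero I_ne_zero)
    ((((differentiableOn_herglotzInt hG).deriv isOpen_ball).div_const 2).congr
      fun _ => wdz_poissonIntR hG)
    fun _ => two_mul_I_mul_mul_wdz_poissonIntR hφ hG hGφ

lemma memHinf_conj_wdzb_poissonIntR_iff (hφ : IsBddPeriodic φ M) (hG : IsBddPeriodic G N)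
    (hGφ : ∀ a b, ∫ t in a..b, φ t = G b - G a) :
    MemHinf (fun z => conj (wdzb (poissonIntR G) z)) ↔
      ∃ K, ∀ z ∈ ball (0 : ℂ) 1, ‖conjPoissonIntR φ z‖ ≤ K := by
  have hQ (z : ℂ) : ‖conjPoissonIntR φ z‖ = ‖conjPoissonIntR (conj φ) z‖ := by
    rw [conjPoissonIntR_eq_kernelInt, conjPoissonIntR_eq_kernelInt, kernelInt_ofReal_conj,
      norm_conj]
  simp only [hQ]
  rw [← bounded_herglotzInt_iff hφ.conj]
  exact memHinf_iff_bounded_of_mul_eq (mul_ne_zero two_ne_zero I_ne_zero)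
    ((((differentiableOn_herglotzInt hG.conj).deriv isOpen_ball).div_const 2).congr
      fun _ => conj_wdzb_poissonIntR hG)
    fun _ => two_mul_I_mul_mul_conj_wdzb_poissonIntR hφ hG hGφ

end HInf

section AbsolutelyContinuous

variable {F : ℂ → ℂ} {Fd HF : ℝ → ℂ}

lemma ae_of_ae_restrict_Ioc_of_periodic {p : ℝ → Prop} {T : ℝ} (hT : 0 < T)
    (hp : Function.Periodic p T) (h : ∀ᵐ t ∂volume.restrict (Ioc 0 T), p t) : ∀ᵐ t, p t := by
  have htranslate : ∀ᵐ t : ℝ, ∀ n : ℤ, t + n • T ∈ Ioc 0 T → p (t + n • T) :=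
    ae_all_iff.2 fun n => (measurePreserving_add_right volume (n • T)).quasiMeasurePreserving.ae
      ((ae_restrict_iff' measurableSet_Ioc).1 h)
  filter_upwards [htranslate] with t ht
  obtain ⟨n, hn, -⟩ := existsUnique_add_zsmul_mem_Ioc hT t 0
  rw [zero_add] at hn
  exact (hp.zsmul n t).mp (ht n hn)

lemma IsACDeriv.exists_isBddPeriodic (hF : IsACDeriv F Fd) (hFd : MemLpT ⊤ Fd) :
    ∃ M, IsBddPeriodic Fd M := by
  refine ⟨lpNorm Fd ⊤ (volume.restrict (Ioc 0 (2 * π))), hF.2.1, ?_, ?_⟩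
  · exact (aecover_Ioc tendsto_neg_atTop_atBot tendsto_id).aestronglyMeasurable
      fun n => (hF.1 (-n) n).1.aestronglyMeasurable
  · exact ae_of_ae_restrict_Ioc_of_periodic Real.two_pi_pos
      (fun t => by simp only [hF.2.1 t]) (ae_le_lpNorm_exponent_top hFd)

lemma IsACDeriv.integral_eq_sub (hF : IsACDeriv F Fd) (a b : ℝ) :
    ∫ t in a..b, Fd t = F (exp ((b : ℂ) * I)) - F (exp ((a : ℂ) * I)) := by
  rw [hF.2.2, hF.2.2, add_sub_add_left_eq_sub,
    intervalIntegral.integral_interval_sub_left (hF.1 _ _) (hF.1 _ _)]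

lemma IsACDeriv.exists_isBddPeriodic_comp_exp (hF : IsACDeriv F Fd) :
    ∃ N, IsBddPeriodic (fun t => F (exp ((t : ℂ) * I))) N := by
  refine exists_isBddPeriodic_of_continuous ?_ fun t => ?_
  · simp only [hF.2.2]
    exact continuous_const.add (intervalIntegral.continuous_primitive hF.1 0)
  · rw [← exp_periodic ((t : ℂ) * I)]
    push_cast
    ring_nf

lemma herglotzInt_eq_poissonIntR_add_I_mul {φ : ℝ → ℂ} {M : ℝ} {z : ℂ} (hφ : IsBddPeriodic φ M)
    (hHF : ∀ᵐ θ : ℝ, IsPVHilbert φ θ (HF θ)) (hz : z ∈ ball (0 : ℂ) 1) :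
    herglotzInt φ z = poissonIntR (fun t => φ t + I * HF t) z := by
  have hHFint := (intervalIntegrable_iff_integrableOn_Ioc_of_le Real.two_pi_pos.le).2
    (integrableOn_of_isPVHilbert hφ hHF)
  rw [herglotzInt_eq (hφ.intervalIntegrable _ _) hz,
    ← poissonIntR_eq_conjPoissonIntR_of_isPVHilbert hφ hHF hz]
  simp only [poissonIntR_eq_kernelInt]
  rw [← kernelInt_const_mul, ← kernelInt_add continuousOn_ofReal_poissonKer hz
    (hφ.intervalIntegrable _ _) (hHFint.const_mul I)]
  rfl

theorem stmt2_general (hF : IsACDeriv F Fd) (hLinf : MemLpT ⊤ Fd)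
    (hHF : ∀ᵐ θ : ℝ, IsPVHilbert Fd θ (HF θ)) :
    (MemHinf (wdz (poissonInt F)) ↔ MemLpT ⊤ HF) ∧
    (MemHinf (fun z => conj (wdzb (poissonInt F) z)) ↔ MemLpT ⊤ HF) ∧
    ∀ z ∈ ball (0 : ℂ) 1, 2 * I * z * wdz (poissonInt F) z
      = poissonIntR (fun t => Fd t + I * HF t) z := by
  obtain ⟨M, hFd⟩ := hF.exists_isBddPeriodic hLinf
  obtain ⟨N, hG⟩ := hF.exists_isBddPeriodic_comp_exp
  have hP : poissonInt F = poissonIntR (fun t => F (exp ((t : ℂ) * I))) := rfl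
  rw [memLpT_top_iff_bounded_conjPoissonIntR hFd hHF, hP]
  refine ⟨memHinf_wdz_poissonIntR_iff hFd hG hF.integral_eq_sub,
    memHinf_conj_wdzb_poissonIntR_iff hFd hG hF.integral_eq_sub, fun z hz => ?_⟩
  rw [two_mul_I_mul_mul_wdz_poissonIntR hFd hG hF.integral_eq_sub hz,
    herglotzInt_eq_poissonIntR_add_I_mul hFd hHF hz]

end AbsolutelyContinuous

/-- For `F : 𝕋 → ℂ` absolutely continuous with `Ḟ ∈ L^∞(𝕋)` and
`f = P[F]`: `f_z` and `conj (f_z̄)` lie in `H^∞(𝔻)` iff the Hilbert transform `H(Ḟ)`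
lies in `L^∞(𝕋)`, and in that case `2 i z f_z(z) = P[Ḟ + i H(Ḟ)](z)` on `𝔻`. -/
theorem stmt2 (F : ℂ → ℂ) (Fd HF : ℝ → ℂ)
    (hF : IsACDeriv F Fd) (hLinf : MemLpT ⊤ Fd)
    (hHF : ∀ᵐ θ : ℝ, IsPVHilbert Fd θ (HF θ)) :
    ((MemHinf (wdz (poissonInt F)) ∧
        MemHinf (fun z => (starRingEnd ℂ) (wdzb (poissonInt F) z))) ↔
      MemLpT ⊤ HF) ∧
    (MemLpT ⊤ HF →
      ∀ z ∈ ball (0:ℂ) 1,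
        2 * Complex.I * z * wdz (poissonInt F) z
          = poissonIntR (fun t => Fd t + Complex.I * HF t) z) := by
  obtain ⟨hz, hzb, hformula⟩ := stmt2_general hF hLinf hHF
  exact ⟨by rw [hz, hzb, and_self], fun _ => hformula⟩

end
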